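/- Let ρ be a d×d complex density matrix, let n ≥ 1, and let α, β be d×d complex matrices with Tr(ρα) = 0 and Tr(ρβ) = 0. Then the GNS inner product of the operators G_α^{(n)} = (I + (i/√n)α)^{⊗n} and G_β^{(n)} = (I + (i/√n)β)^{⊗n} satisfies Tr( ρ^⊗n · (G_α^{(n)})† · G_β^{(n)} ) = (1 + Tr(ρ · α† · β)/n)^n. -/

import Mathlib

open scoped ComplexOrder
open Matrix

noncomputable section

/-- The `n`-fold tensor power of a `d×d` matrix, on sites indexed by `Fin n → Fin d`:
`(ρ^{⊗n})(x,z) = ∏ i, ρ (x i) (z i)`. -/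
def tensorPow (d n : ℕ) (ρ : Matrix (Fin d) (Fin d) ℂ) :
    Matrix (Fin n → Fin d) (Fin n → Fin d) ℂ :=
  fun x z => ∏ i, ρ (x i) (z i)

/-- Tensor product `A₁ ⊗ ⋯ ⊗ Aₙ` of single-site matrices. -/
def siteProd (d n : ℕ) (A : Fin n → Matrix (Fin d) (Fin d) ℂ) :
    Matrix (Fin n → Fin d) (Fin n → Fin d) ℂ :=
  fun x z => ∏ i, A i (x i) (z i)

/-- `Ω_σ(A) = (σA + Aσ)/2`. -/
def Omega {m : Type*} [Fintype m] (σ A : Matrix m m ℂ) : Matrix m m ℂ :=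
  (1 / 2 : ℂ) • (σ * A + A * σ)

/-- The depolarizing channel `D_y(A) = y⁻¹ A + (1 - y⁻¹) (Tr A / d) I` applied to site `i`
of an `n`-site matrix. -/
def depolSite (d n : ℕ) (y : ℝ) (i : Fin n)
    (M : Matrix (Fin n → Fin d) (Fin n → Fin d) ℂ) :
    Matrix (Fin n → Fin d) (Fin n → Fin d) ℂ :=
  fun x z => ((y⁻¹ : ℝ) : ℂ) * M x z +
    ((1 - y⁻¹ : ℝ) : ℂ) / (d : ℂ) *
      (if x i = z i then ∑ a : Fin d, M (Function.update x i a) (Function.update z i a) else 0)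

/-- `D_y^{⊗n}`: the depolarizing channel applied to every one of the `n` sites. -/
def depolPow (d n : ℕ) (y : ℝ) :
    Matrix (Fin n → Fin d) (Fin n → Fin d) ℂ → Matrix (Fin n → Fin d) (Fin n → Fin d) ℂ :=
  (List.finRange n).foldr (fun i f => depolSite d n y i ∘ f) id

/-- `T_Σ`: the linear span of operators acting as `aᵢ` with `Tr(ρ aᵢ) = 0` on each site
`i ∈ S` and as the identity on all other sites. -/
def TS (d n : ℕ) (ρ : Matrix (Fin d) (Fin d) ℂ) (S : Finset (Fin n)) :
    Submodule ℂ (Matrix (Fin n → Fin d) (Fin n → Fin d) ℂ) :=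
  Submodule.span ℂ {M | ∃ a : Fin n → Matrix (Fin d) (Fin d) ℂ,
    (∀ i ∈ S, (ρ * a i).trace = 0) ∧ (∀ i ∉ S, a i = 1) ∧ M = siteProd d n a}

/-- The permutation unitary `U_π`, with entries `(U_π)_{x,y} = 1` iff `x = y ∘ π⁻¹`. -/
def permU (d n : ℕ) (π : Equiv.Perm (Fin n)) :
    Matrix (Fin n → Fin d) (Fin n → Fin d) ℂ :=
  fun x z => if x = z ∘ ⇑π⁻¹ then 1 else 0

/-- The symmetrizing channel `P(A) = (1/n!) ∑_π U_π A U_π†`. -/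
def symmetrize (d n : ℕ) (A : Matrix (Fin n → Fin d) (Fin n → Fin d) ℂ) :
    Matrix (Fin n → Fin d) (Fin n → Fin d) ℂ :=
  ((n.factorial : ℂ))⁻¹ • ∑ π : Equiv.Perm (Fin n), permU d n π * A * (permU d n π)ᴴ

/-- Vertex operator `G_α^{(n)} = (I + (i/√n)α)^{⊗n}`. -/
def GVertex (d n : ℕ) (α : Matrix (Fin d) (Fin d) ℂ) :
    Matrix (Fin n → Fin d) (Fin n → Fin d) ℂ :=
  tensorPow d n (1 + (Complex.I / (Real.sqrt n : ℂ)) • α)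

/-!
All three operators are tensor powers, and multiplication, adjoint and trace act site by site on
tensor products, so the trace is the `n`-th power of the single-site trace
`Tr(ρ (I + (i/√n)α)† (I + (i/√n)β))`. There the two terms linear in `α†` and `β` vanish, leaving
`1 + |i/√n|² Tr(ρ α† β)`.
-/

section SingleSite

variable {m R : Type*} [Fintype m] [CommSemiring R]

theorem trace_mul_one_add_smul_mul_one_add_smul [DecidableEq m] {ρ A B : Matrix m m R}
    (hρ : ρ.trace = 1) (hA : (ρ * A).trace = 0) (hB : (ρ * B).trace = 0) (a b : R) :
    (ρ * (1 + a • A) * (1 + b • B)).trace = 1 + a * b * (ρ * A * B).trace := by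
  simp only [mul_add, mul_one, add_mul, Matrix.mul_smul, Matrix.smul_mul, trace_add, trace_smul,
    smul_eq_mul, hρ, hA, hB, mul_zero, add_zero, zero_add]
  ring

theorem trace_mul_conjTranspose_of_isHermitian [StarRing R] {ρ : Matrix m m R}
    (hρ : ρ.IsHermitian) (A : Matrix m m R) : (ρ * Aᴴ).trace = star (ρ * A).trace := by
  rw [← trace_conjTranspose, conjTranspose_mul, hρ.eq, trace_mul_comm]

end SingleSite

section SiteProd

variable {d n : ℕ}

theorem siteProd_mul_siteProd (A B : Fin n → Matrix (Fin d) (Fin d) ℂ) :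
    siteProd d n A * siteProd d n B = siteProd d n (fun i => A i * B i) := by
  ext x z
  simp only [mul_apply, siteProd, ← Finset.prod_mul_distrib]
  exact (Fintype.prod_sum fun i a => A i (x i) a * B i a (z i)).symm

theorem conjTranspose_siteProd (A : Fin n → Matrix (Fin d) (Fin d) ℂ) :
    (siteProd d n A)ᴴ = siteProd d n (fun i => (A i)ᴴ) := by
  ext x z
  simp only [conjTranspose_apply, siteProd, star_prod]

theorem trace_siteProd (A : Fin n → Matrix (Fin d) (Fin d) ℂ) :
    (siteProd d n A).trace = ∏ i, (A i).trace :=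
  (Fintype.prod_sum fun i a => A i a a).symm

theorem trace_siteProd_mul_conjTranspose_mul (P A B : Fin n → Matrix (Fin d) (Fin d) ℂ) :
    (siteProd d n P * (siteProd d n A)ᴴ * siteProd d n B).trace
      = ∏ i, (P i * (A i)ᴴ * B i).trace := by
  rw [conjTranspose_siteProd, siteProd_mul_siteProd, siteProd_mul_siteProd, trace_siteProd]

theorem trace_tensorPow_mul_conjTranspose_mul (P A B : Matrix (Fin d) (Fin d) ℂ) :
    (tensorPow d n P * (tensorPow d n A)ᴴ * tensorPow d n B).trace
      = (P * Aᴴ * B).trace ^ n :=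
  (trace_siteProd_mul_conjTranspose_mul (fun _ => P) (fun _ => A) fun _ => B).trans
    (Fin.prod_const n _)

end SiteProd

theorem star_I_div_sqrt_mul_self {x : ℝ} (hx : 0 ≤ x) :
    star (Complex.I / (√x : ℂ)) * (Complex.I / (√x : ℂ)) = (x : ℂ)⁻¹ := by
  rw [Complex.star_def, Complex.conj_mul', norm_div, Complex.norm_I, Complex.norm_real,
    Real.norm_of_nonneg (Real.sqrt_nonneg x), ← Complex.ofReal_pow, div_pow, Real.sq_sqrt hx,
    one_pow, one_div, Complex.ofReal_inv]

theorem vertex_inner_product_general (d n : ℕ) (ρ α β : Matrix (Fin d) (Fin d) ℂ)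
    (hρ : ρ.trace = 1) (hα : (ρ * αᴴ).trace = 0) (hβ : (ρ * β).trace = 0) :
    (tensorPow d n ρ * (GVertex d n α)ᴴ * GVertex d n β).trace
      = (1 + (ρ * αᴴ * β).trace / (n : ℂ)) ^ n := by
  have star_mul_self : star (Complex.I / (√n : ℂ)) * (Complex.I / (√n : ℂ)) = (n : ℂ)⁻¹ := by
    simpa only [Complex.ofReal_natCast] using star_I_div_sqrt_mul_self n.cast_nonneg
  rw [GVertex, GVertex, trace_tensorPow_mul_conjTranspose_mul, conjTranspose_add,
    conjTranspose_one, conjTranspose_smul,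
    trace_mul_one_add_smul_mul_one_add_smul hρ hα hβ, star_mul_self, inv_mul_eq_div]

/-- GNS inner product of vertex operators:
`Tr(ρ^{⊗n} (G_α^{(n)})† G_β^{(n)}) = (1 + Tr(ρ α† β)/n)^n`. -/
theorem vertex_inner_product
    (d n : ℕ) (hd : 1 ≤ d) (hn : 1 ≤ n)
    (ρ : Matrix (Fin d) (Fin d) ℂ) (hρ : ρ.PosSemidef) (hρtr : ρ.trace = 1)
    (α β : Matrix (Fin d) (Fin d) ℂ)
    (hα : (ρ * α).trace = 0) (hβ : (ρ * β).trace = 0) :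
    (tensorPow d n ρ * (GVertex d n α)ᴴ * GVertex d n β).trace
      = (1 + (ρ * αᴴ * β).trace / (n : ℂ)) ^ n := by
  refine vertex_inner_product_general d n ρ α β hρtr ?_ hβ
  rw [trace_mul_conjTranspose_of_isHermitian hρ.isHermitian, hα, star_zero]
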